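/- (Formula for v-adic multiple zeta star values at negative integers in terms of ∞-adic ones.) Let r ≥ 1 and m_1,…,m_r ∈ ℤ_{≥0}. Then in A: ζ_v⋆(−m_1,…,−m_r) = Σ_{l=0}^{r} (−1)^l · ζ⋆_{<d}(−m_{l+1},…,−m_r) · [ Σ_{(a_1,…,a_l)} v^{a_1+⋯+a_l} · ζ_{<d}(−(m_1−a_1)) ⋯ ζ_{<d}(−(m_l−a_l)) · C(m_1,a_1) ⋯ C(m_l,a_l) · ζ_∞⋆(−a_1,…,−a_l) ], where the inner sum runs over all integer tuples (a_1,…,a_l) with 0 ≤ a_j ≤ m_j and (q−1) | (m_j − a_j) for all 1 ≤ j ≤ l, and the l = 0 summand is ζ⋆_{<d}(−m_1,…,−m_r). -/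

import Mathlib

open Polynomial

/-- The power sum `S_i(-m)`: the sum of `n ^ m` over monic polynomials `n` of degree `i`. -/
noncomputable def powerSum (F : Type*) [Field F] [Fintype F] (i m : ℕ) : Polynomial F :=
  ∑ᶠ n ∈ {n : Polynomial F | n.Monic ∧ n.natDegree = i}, n ^ m

/-- The restricted power sum `S̃_i(-m)`: the sum of `n ^ m` over monic polynomials `n` of
degree `i` not divisible by `v`. -/
noncomputable def powerSumV (F : Type*) [Field F] [Fintype F] (v : Polynomial F) (i m : ℕ) :
    Polynomial F :=
  ∑ᶠ n ∈ {n : Polynomial F | n.Monic ∧ n.natDegree = i ∧ ¬ v ∣ n}, n ^ m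

/-- `ζ_∞(-m_1, …, -m_r)`, the ∞-adic multiple zeta value at nonpositive integers:
the sum over `i_1 > ⋯ > i_r ≥ 0` of `S_{i_1}(-m_1) ⋯ S_{i_r}(-m_r)`.
Only `m 0, …, m (r-1)` are used.  The depth-0 value is `1`. -/
noncomputable def zetaInf (F : Type*) [Field F] [Fintype F] (r : ℕ) (m : ℕ → ℕ) :
    Polynomial F :=
  ∑ᶠ i ∈ {i : Fin r → ℕ | StrictAnti i}, ∏ j : Fin r, powerSum F (i j) (m (j : ℕ))

/-- `ζ⋆_∞(-m_1, …, -m_r)`, the ∞-adic multiple zeta star value at nonpositive integers: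
the sum over `i_1 ≥ ⋯ ≥ i_r ≥ 0` of `S_{i_1}(-m_1) ⋯ S_{i_r}(-m_r)`. -/
noncomputable def zetaInfStar (F : Type*) [Field F] [Fintype F] (r : ℕ) (m : ℕ → ℕ) :
    Polynomial F :=
  ∑ᶠ i ∈ {i : Fin r → ℕ | Antitone i}, ∏ j : Fin r, powerSum F (i j) (m (j : ℕ))

/-- `ζ_v(-m_1, …, -m_r)`, the v-adic multiple zeta value at nonpositive integers. -/
noncomputable def zetaV (F : Type*) [Field F] [Fintype F] (v : Polynomial F) (r : ℕ)
    (m : ℕ → ℕ) : Polynomial F :=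
  ∑ᶠ i ∈ {i : Fin r → ℕ | StrictAnti i}, ∏ j : Fin r, powerSumV F v (i j) (m (j : ℕ))

/-- `ζ⋆_v(-m_1, …, -m_r)`, the v-adic multiple zeta star value at nonpositive integers. -/
noncomputable def zetaVStar (F : Type*) [Field F] [Fintype F] (v : Polynomial F) (r : ℕ)
    (m : ℕ → ℕ) : Polynomial F :=
  ∑ᶠ i ∈ {i : Fin r → ℕ | Antitone i}, ∏ j : Fin r, powerSumV F v (i j) (m (j : ℕ))

/-- `ζ_{<d}(-m_1, …, -m_r)`, the truncated multiple zeta value: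
the sum over `d > i_1 > ⋯ > i_r ≥ 0` of `S_{i_1}(-m_1) ⋯ S_{i_r}(-m_r)`. -/
noncomputable def zetaLt (F : Type*) [Field F] [Fintype F] (d r : ℕ) (m : ℕ → ℕ) :
    Polynomial F :=
  ∑ᶠ i ∈ {i : Fin r → ℕ | StrictAnti i ∧ ∀ j, i j < d},
    ∏ j : Fin r, powerSum F (i j) (m (j : ℕ))

/-- `ζ⋆_{<d}(-m_1, …, -m_r)`, the truncated multiple zeta star value. -/
noncomputable def zetaLtStar (F : Type*) [Field F] [Fintype F] (d r : ℕ) (m : ℕ → ℕ) :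
    Polynomial F :=
  ∑ᶠ i ∈ {i : Fin r → ℕ | Antitone i ∧ ∀ j, i j < d},
    ∏ j : Fin r, powerSum F (i j) (m (j : ℕ))

/-- `ζ_{<d}(-m)`, the depth-one truncated zeta value `Σ_{d > i ≥ 0} S_i(-m)`. -/
noncomputable def zetaLtOne (F : Type*) [Field F] [Fintype F] (d m : ℕ) : Polynomial F :=
  ∑ᶠ i ∈ {i : ℕ | i < d}, powerSum F i m

/-!
A monic polynomial of degree at least `d = deg v` is uniquely `v * b + c` with `b` monic and
`deg c < d`, and it is not divisible by `v` iff `c ≠ 0`. Expanding `(v * b + c) ^ m` and summing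
over `c ∈ Fˣ * {monics}`, where `∑ x ∈ Fˣ, x ^ k` is `-1` or `0` according to whether `q - 1 ∣ k`,
expresses `S̃_{i + d}(-m)` linearly through the `S_i(-a)`, `a ≤ m`; and `S̃_i = S_i` for `i < d`.
It remains to split the sum over `i_1 ≥ ⋯ ≥ i_r` according to the number `l` of indices that are
at least `d`. -/

section StarSum

variable {R : Type*} [CommSemiring R]

open Classical in
/-- The truncated star sum `∑ f 0 i_1 ⋯ f (r - 1) i_r` over `N > i_1 ≥ ⋯ ≥ i_r ≥ 0`, the common
form of all the star values. The family `f` is indexed by `ℕ` instead of `Fin r` so that it can be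
shifted without casts. -/
noncomputable def starSum (N r : ℕ) (f : ℕ → ℕ → R) : R :=
  ∑ i ∈ Fintype.piFinset (fun _ : Fin r => Finset.range N) with Antitone i, ∏ j : Fin r, f j (i j)

lemma finsum_antitone_lt_eq_starSum (N r : ℕ) (f : ℕ → ℕ → R) :
    ∑ᶠ i ∈ {i : Fin r → ℕ | Antitone i ∧ ∀ j, i j < N}, ∏ j : Fin r, f j (i j) =
      starSum N r f := by
  rw [starSum, ← finsum_mem_coe_finset]
  congr! 4 with i
  simp [and_comm]

lemma finsum_antitone_eq_starSum {N r : ℕ} {f : ℕ → ℕ → R}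
    (hf : ∀ j < r, ∀ n, N ≤ n → f j n = 0) :
    ∑ᶠ i ∈ {i : Fin r → ℕ | Antitone i}, ∏ j : Fin r, f j (i j) = starSum N r f := by
  rw [← finsum_antitone_lt_eq_starSum]
  refine finsum_mem_inter_support_eq _ _ _ (Set.ext fun i => and_congr_left fun hi => ?_)
  refine ⟨fun hanti => ⟨hanti, fun j => ?_⟩, And.left⟩
  by_contra! hj
  exact hi (Finset.prod_eq_zero (Finset.mem_univ j) (hf j j.2 _ hj))

lemma starSum_congr {N r : ℕ} {f g : ℕ → ℕ → R} (h : ∀ j < r, ∀ n < N, f j n = g j n) :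
    starSum N r f = starSum N r g := by
  refine Finset.sum_congr rfl fun i hi => Finset.prod_congr rfl fun j _ => h j j.2 _ ?_
  exact Finset.mem_range.1 (Fintype.mem_piFinset.1 (Finset.mem_filter.1 hi).1 j)

lemma starSum_neg {S : Type*} [CommRing S] (N r : ℕ) (f : ℕ → ℕ → S) :
    starSum N r (fun j n => -f j n) = (-1) ^ r * starSum N r f := by
  simp only [starSum, Finset.prod_neg, Finset.card_univ, Fintype.card_fin, Finset.mul_sum]

@[simp]
lemma starSum_zero (N : ℕ) (f : ℕ → ℕ → R) : starSum N 0 f = 1 := by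
  simp [starSum, Subsingleton.antitone, Finset.filter_true_of_mem]

lemma antitone_iff_fin_tail {α : Type*} [Preorder α] {r : ℕ} {i : Fin (r + 1) → α} :
    Antitone i ↔ (∀ j, Fin.tail i j ≤ i 0) ∧ Antitone (Fin.tail i) := by
  conv_lhs => rw [← Fin.cons_self_tail i]
  rw [antitone_iff_forall_lt, antitone_iff_forall_lt]
  exact Fin.liftFun_cons (· ≥ ·)

lemma starSum_succ (N r : ℕ) (f : ℕ → ℕ → R) :
    starSum N (r + 1) f =
      ∑ n ∈ Finset.range N, f 0 n * starSum (n + 1) r (fun j => f (j + 1)) := by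
  classical
  have mem_iff (i : Fin (r + 1) → ℕ) : ((∀ j, i j < N) ∧ Antitone i) ↔
      i 0 < N ∧ (∀ j, Fin.tail i j < i 0 + 1) ∧ Antitone (Fin.tail i) := by
    simp only [antitone_iff_fin_tail, Fin.forall_fin_succ, Nat.lt_succ_iff]
    exact ⟨fun h => ⟨h.1.1, h.2⟩, fun h => ⟨⟨h.1, fun j => (h.2.1 j).trans_lt h.1⟩, h.2⟩⟩
  simp only [starSum, Finset.mul_sum, Finset.sum_sigma']
  refine Finset.sum_bij' (fun i _ => ⟨i 0, Fin.tail i⟩) (fun p _ => Fin.cons p.1 p.2) ?_ ?_ ?_ ?_ ?_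
  · intro i hi
    simpa [mem_iff] using hi
  · rintro ⟨n, i⟩ hi
    simpa [mem_iff] using hi
  · intro i _
    exact Fin.cons_self_tail i
  · rintro ⟨n, i⟩ _
    simp
  · intro i _
    simp [Fin.prod_univ_succ, Fin.tail]

lemma starSum_add (N d r : ℕ) (f : ℕ → ℕ → R) :
    starSum (N + d) r f =
      ∑ l ∈ Finset.range (r + 1),
        starSum N l (fun j n => f j (n + d)) * starSum d (r - l) (fun j => f (l + j)) := by
  induction r generalizing N f with
  | zero => simp
  | succ r ih =>
    calc starSum (N + d) (r + 1) f
        = ∑ n ∈ Finset.range d, f 0 n * starSum (n + 1) r (fun j => f (j + 1)) +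
            ∑ n ∈ Finset.range N, f 0 (n + d) * starSum (n + 1 + d) r (fun j => f (j + 1)) := by
          rw [starSum_succ, add_comm N d, Finset.sum_range_add]
          simp only [add_comm d, add_right_comm _ d 1]
      _ = starSum d (r + 1) f +
            ∑ l ∈ Finset.range (r + 1), starSum N (l + 1) (fun j n => f j (n + d)) *
              starSum d (r - l) (fun j => f (l + 1 + j)) := by
          simp only [ih, starSum_succ, Finset.mul_sum, Finset.sum_mul]
          rw [Finset.sum_comm]
          simp only [mul_assoc, add_right_comm]
      _ = _ := by
          rw [Finset.sum_range_succ' _ (r + 1), add_comm]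
          simp

lemma finsum_mem_extend_zero_eq_sum {ι κ α M : Type*} [Fintype κ] [DecidableEq κ] [Zero α]
    [AddCommMonoid M] {e : κ → ι} (he : Function.Injective e) (t : ι → Finset α)
    (g : (ι → α) → M) :
    ∑ᶠ a ∈ {a : ι → α | (∀ k, a (e k) ∈ t (e k)) ∧ ∀ j ∉ Set.range e, a j = 0}, g a =
      ∑ a ∈ Fintype.piFinset (fun k => t (e k)), g (Function.extend e a 0) := by
  have himage : {a : ι → α | (∀ k, a (e k) ∈ t (e k)) ∧ ∀ j ∉ Set.range e, a j = 0} =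
      (fun a : κ → α => Function.extend e a 0) ''
        (Fintype.piFinset (fun k => t (e k)) : Set (κ → α)) := by
    ext a
    simp only [Set.mem_image, Finset.mem_coe, Fintype.mem_piFinset]
    constructor
    · rintro ⟨hmem, hzero⟩
      refine ⟨a ∘ e, hmem, funext fun j => ?_⟩
      by_cases hj : j ∈ Set.range e
      · obtain ⟨k, rfl⟩ := hj
        exact he.extend_apply _ _ k
      · rw [Function.extend_apply' _ _ _ hj, hzero j hj, Pi.zero_apply]
    · rintro ⟨b, hb, rfl⟩
      refine ⟨fun k => ?_, fun j hj => Function.extend_apply' _ _ _ hj⟩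
      rw [he.extend_apply]
      exact hb k
  rw [himage, finsum_mem_image (Function.extend_injective he (0 : ι → α)).injOn,
    finsum_mem_coe_finset]

lemma starSum_sum_mul (N r : ℕ) (t : ℕ → Finset ℕ) (c : ℕ → ℕ → R) (g : ℕ → ℕ → R) :
    starSum N r (fun j n => ∑ a ∈ t j, c j a * g a n) =
      ∑ᶠ a ∈ {a : ℕ → ℕ | (∀ j < r, a j ∈ t j) ∧ ∀ j, r ≤ j → a j = 0},
        (∏ j ∈ Finset.range r, c j (a j)) * starSum N r (fun j => g (a j)) := by
  have htuples : {a : ℕ → ℕ | (∀ j < r, a j ∈ t j) ∧ ∀ j, r ≤ j → a j = 0} =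
      {a | (∀ k : Fin r, a k ∈ t k) ∧ ∀ j ∉ Set.range (Fin.val : Fin r → ℕ), a j = 0} := by
    simp [Fin.forall_iff]
  rw [htuples, finsum_mem_extend_zero_eq_sum Fin.val_injective]
  simp only [starSum, Finset.prod_univ_sum, ← Fin.prod_univ_eq_prod_range, Finset.mul_sum,
    Fin.val_injective.extend_apply, Finset.prod_mul_distrib]
  exact Finset.sum_comm

end StarSum

section FinitePolynomialSets

section Semiring

variable {R : Type*} [Semiring R] [Nontrivial R]

lemma degree_lt_degree_mul_of_monic {v b c : R[X]} (hb : b.Monic)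
    (hc : c.degree < v.degree) : c.degree < (v * b).degree := by
  rw [hb.degree_mul]
  exact hc.trans_le (le_add_of_nonneg_right (zero_le_degree_iff.2 hb.ne_zero))

lemma natDegree_mul_add_of_monic {v b c : R[X]} (hv : v.Monic) (hb : b.Monic)
    (hc : c.degree < v.degree) : (v * b + c).natDegree = b.natDegree + v.natDegree := by
  rw [natDegree_add_eq_left_of_degree_lt (degree_lt_degree_mul_of_monic hb hc),
    hv.natDegree_mul hb, add_comm]

end Semiring

section FiniteSemiring

variable (R : Type*) [Semiring R] [Finite R]

lemma finite_setOf_degree_lt (d : ℕ) : {c : R[X] | c.degree < d}.Finite := by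
  have : Finite (degreeLT R d) := Finite.of_equiv _ (degreeLTEquiv R d).toEquiv.symm
  exact (Set.toFinite (degreeLT R d : Set R[X])).subset fun c hc => mem_degreeLT.2 hc

/-- The finset of polynomials of degree less than `d`, that is, of remainders modulo a monic
polynomial of degree `d`. The zero polynomial belongs to it for every `d`. -/
noncomputable def polysDegreeLT (d : ℕ) : Finset R[X] :=
  (finite_setOf_degree_lt R d).toFinset

open Classical in
/-- The finset of monic polynomials of degree `i`, which indexes the power sums `S_i`. -/
noncomputable def monicsOfDegree (i : ℕ) : Finset R[X] :=
  {n ∈ polysDegreeLT R (i + 1) | n.Monic ∧ n.natDegree = i}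

variable {R}

@[simp]
lemma mem_polysDegreeLT {d : ℕ} {c : R[X]} : c ∈ polysDegreeLT R d ↔ c.degree < d := by
  simp [polysDegreeLT]

@[simp]
lemma mem_monicsOfDegree {i : ℕ} {n : R[X]} :
    n ∈ monicsOfDegree R i ↔ n.Monic ∧ n.natDegree = i := by
  simp only [monicsOfDegree, Finset.mem_filter, mem_polysDegreeLT, and_iff_right_iff_imp]
  rintro ⟨-, rfl⟩
  exact degree_le_natDegree.trans_lt (by exact_mod_cast Nat.lt_succ_self _)

lemma card_polysDegreeLT (d : ℕ) : (polysDegreeLT R d).card = Nat.card R ^ d := by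
  have hcoe : (polysDegreeLT R d : Set R[X]) = degreeLT R d := by
    ext; simp [mem_degreeLT]
  rw [← Set.ncard_coe_finset, hcoe, ← Nat.card_coe_set_eq, SetLike.coe_sort_coe,
    Nat.card_congr (degreeLTEquiv R d).toEquiv, Nat.card_fun, Nat.card_fin]

open Classical in
lemma sum_filter_monic_polysDegreeLT {M : Type*} [AddCommMonoid M] [Nontrivial R] (d : ℕ)
    (g : R[X] → M) :
    ∑ n ∈ polysDegreeLT R d with n.Monic, g n =
      ∑ i ∈ Finset.range d, ∑ n ∈ monicsOfDegree R i, g n := by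
  have natDegree_lt_iff {n : R[X]} (hn : n.Monic) : n.natDegree < d ↔ n.degree < d :=
    natDegree_lt_iff_degree_lt hn.ne_zero
  rw [← Finset.sum_fiberwise_of_maps_to (t := Finset.range d) (g := natDegree)]
  · refine Finset.sum_congr rfl fun i hi => Finset.sum_congr (Finset.ext fun n => ?_) fun _ _ => rfl
    have hlt (hn : n.Monic) (hni : n.natDegree = i) : n.degree < d :=
      (natDegree_lt_iff hn).1 (hni ▸ Finset.mem_range.1 hi)
    simp only [Finset.mem_filter, mem_polysDegreeLT, mem_monicsOfDegree]
    tauto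
  · intro n hn
    obtain ⟨hlt, hmonic⟩ := Finset.mem_filter.1 hn
    exact Finset.mem_range.2 ((natDegree_lt_iff hmonic).2 (mem_polysDegreeLT.1 hlt))

end FiniteSemiring

section Ring

variable {R : Type*} [Ring R]

lemma dvd_mul_add_iff_of_degree_lt {v c : R[X]} (hv : v.Monic) (hc : c.degree < v.degree)
    (b : R[X]) : v ∣ v * b + c ↔ c = 0 := by
  rw [dvd_add_right (dvd_mul_right v b)]
  refine ⟨fun hdvd => ?_, fun h => h ▸ dvd_zero v⟩
  by_contra hne
  exact hv.not_dvd_of_degree_lt hne hc hdvd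

lemma card_polysDegreeLT_cast_eq_zero [Finite R] {d : ℕ} (hd : d ≠ 0) :
    ((polysDegreeLT R d).card : R[X]) = 0 := by
  cases nonempty_fintype R
  rw [card_polysDegreeLT, Nat.card_eq_fintype_card, Nat.cast_pow, ← C_eq_natCast,
    Nat.cast_card_eq_zero, C_0, zero_pow hd]

variable [Nontrivial R] [Finite R]

lemma sum_monicsOfDegree_add {M : Type*} [AddCommMonoid M] {v : R[X]} (hv : v.Monic) (i : ℕ)
    (g : R[X] → M) :
    ∑ n ∈ monicsOfDegree R (i + v.natDegree), g n =
      ∑ b ∈ monicsOfDegree R i, ∑ c ∈ polysDegreeLT R v.natDegree, g (v * b + c) := by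
  rw [← Finset.sum_product']
  symm
  refine Finset.sum_bij' (fun p _ => v * p.1 + p.2) (fun n _ => (n /ₘ v, n %ₘ v)) ?_ ?_ ?_ ?_ ?_
  · rintro ⟨b, c⟩ hp
    simp only [Finset.mem_product, mem_monicsOfDegree, mem_polysDegreeLT,
      ← degree_eq_natDegree hv.ne_zero] at hp ⊢
    obtain ⟨⟨hb, rfl⟩, hc⟩ := hp
    exact ⟨(hv.mul hb).add_of_left (degree_lt_degree_mul_of_monic hb hc),
      natDegree_mul_add_of_monic hv hb hc⟩
  · intro n hn
    simp only [Finset.mem_product, mem_monicsOfDegree, mem_polysDegreeLT,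
      ← degree_eq_natDegree hv.ne_zero] at hn ⊢
    obtain ⟨hn, hni⟩ := hn
    have hmod : (n %ₘ v).degree < v.degree := degree_modByMonic_lt _ hv
    have hvn : v.degree ≤ n.degree := by
      rw [degree_eq_natDegree hv.ne_zero, degree_eq_natDegree hn.ne_zero, hni]
      exact_mod_cast Nat.le_add_left _ _
    refine ⟨⟨hv.of_mul_monic_left ?_, ?_⟩, hmod⟩
    · rw [eq_sub_of_add_eq' (modByMonic_add_div n v)]
      exact hn.sub_of_left (hmod.trans_le hvn)
    · rw [natDegree_divByMonic _ hv, hni, Nat.add_sub_cancel]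
  · rintro ⟨b, c⟩ hp
    have hc := mem_polysDegreeLT.1 (Finset.mem_product.1 hp).2
    rw [← degree_eq_natDegree hv.ne_zero] at hc
    obtain ⟨hdiv, hmod⟩ := div_modByMonic_unique b c hv ⟨add_comm _ _, hc⟩
    exact Prod.ext hdiv hmod
  · intro n _
    rw [add_comm]
    exact modByMonic_add_div n v
  · intro _ _
    rfl

end Ring

section Field

variable {F : Type*} [Field F]

open Classical in
lemma sum_polysDegreeLT_ne_zero {M : Type*} [AddCommMonoid M] [Fintype F] (d : ℕ) (g : F[X] → M) :
    ∑ c ∈ polysDegreeLT F d with c ≠ 0, g c =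
      ∑ x : Fˣ, ∑ n ∈ polysDegreeLT F d with n.Monic, g (C (x : F) * n) := by
  rw [← Finset.sum_product']
  refine Finset.sum_bij'
    (fun c hc => (Units.mk0 c.leadingCoeff (leadingCoeff_ne_zero.2 (Finset.mem_filter.1 hc).2),
      C c.leadingCoeff⁻¹ * c))
    (fun p _ => C (p.1 : F) * p.2) ?_ ?_ ?_ ?_ ?_
  · intro c hc
    simp only [Finset.mem_product, Finset.mem_filter, Finset.mem_univ, true_and,
      mem_polysDegreeLT] at hc ⊢
    have hlc : c.leadingCoeff ≠ 0 := leadingCoeff_ne_zero.2 hc.2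
    refine ⟨(degree_C_mul (inv_ne_zero hlc)).trans_lt hc.1, ?_⟩
    exact monic_C_mul_of_mul_leadingCoeff_eq_one (inv_mul_cancel₀ hlc)
  · rintro ⟨x, n⟩ hp
    simp only [Finset.mem_product, Finset.mem_filter, Finset.mem_univ, true_and,
      mem_polysDegreeLT] at hp ⊢
    exact ⟨(degree_C_mul x.ne_zero).trans_lt hp.1, mul_ne_zero (C_ne_zero.2 x.ne_zero) hp.2.ne_zero⟩
  · intro c hc
    have hlc : c.leadingCoeff ≠ 0 := leadingCoeff_ne_zero.2 (Finset.mem_filter.1 hc).2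
    simp [← mul_assoc, ← C_mul, hlc]
  · rintro ⟨x, n⟩ hp
    have hn : n.Monic := (Finset.mem_filter.1 (Finset.mem_product.1 hp).2).2
    ext <;> simp [hn.leadingCoeff]
  · intro c hc
    have hlc : c.leadingCoeff ≠ 0 := leadingCoeff_ne_zero.2 (Finset.mem_filter.1 hc).2
    simp [← mul_assoc, ← C_mul, hlc]

end Field

end FinitePolynomialSets

lemma sum_sum_mul_add_pow {R : Type*} [CommSemiring R] (v : R) (s t : Finset R) (m : ℕ) :
    ∑ b ∈ s, ∑ c ∈ t, (v * b + c) ^ m =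
      ∑ a ∈ Finset.range (m + 1),
        v ^ a * ((∑ c ∈ t, c ^ (m - a)) * (m.choose a : R)) * ∑ b ∈ s, b ^ a := by
  calc ∑ b ∈ s, ∑ c ∈ t, (v * b + c) ^ m
      = ∑ a ∈ Finset.range (m + 1), ∑ b ∈ s, ∑ c ∈ t,
          (v * b) ^ a * c ^ (m - a) * (m.choose a : R) := by
        simp only [add_pow, Finset.sum_comm (t := Finset.range (m + 1))]
    _ = _ := by
        refine Finset.sum_congr rfl fun a _ => ?_
        simp only [Finset.mul_sum, Finset.sum_mul]
        exact Finset.sum_congr rfl fun b _ => Finset.sum_congr rfl fun c _ => by ring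

section PowerSums

variable {F : Type*} [Field F] [Fintype F]

lemma powerSum_eq_sum (i m : ℕ) : powerSum F i m = ∑ n ∈ monicsOfDegree F i, n ^ m := by
  rw [powerSum, ← finsum_mem_coe_finset]
  simp

open Classical in
lemma powerSumV_eq_sum (v : F[X]) (i m : ℕ) :
    powerSumV F v i m = ∑ n ∈ monicsOfDegree F i with ¬ v ∣ n, n ^ m := by
  rw [powerSumV, ← finsum_mem_coe_finset]
  simp [and_assoc]

open Classical in
lemma zetaLtOne_eq_sum (d k : ℕ) :
    zetaLtOne F d k = ∑ n ∈ polysDegreeLT F d with n.Monic, n ^ k := by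
  rw [sum_filter_monic_polysDegreeLT, zetaLtOne]
  simp only [powerSum_eq_sum, ← finsum_mem_coe_finset, Finset.coe_range]
  rfl

lemma powerSum_add_natDegree {v : F[X]} (hv : v.Monic) (i m : ℕ) :
    powerSum F (i + v.natDegree) m =
      ∑ a ∈ Finset.range (m + 1),
        v ^ a * ((∑ c ∈ polysDegreeLT F v.natDegree, c ^ (m - a)) * (m.choose a : F[X])) *
          powerSum F i a := by
  simp only [powerSum_eq_sum]
  rw [sum_monicsOfDegree_add hv, sum_sum_mul_add_pow]

lemma powerSum_eq_zero {i m : ℕ} (h : m < i) : powerSum F i m = 0 := by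
  induction i generalizing m with
  | zero => exact absurd h m.not_lt_zero
  | succ i ih =>
    rw [← natDegree_X (R := F), powerSum_add_natDegree monic_X, natDegree_X]
    refine Finset.sum_eq_zero fun a ha => ?_
    obtain ham | rfl : a < m ∨ a = m := (Finset.mem_range_succ_iff.1 ha).lt_or_eq
    · rw [ih (by omega), mul_zero]
    · simp [card_polysDegreeLT_cast_eq_zero]

open Classical in
lemma sum_units_C_pow (k : ℕ) :
    ∑ x : Fˣ, C (x : F) ^ k = if Fintype.card F - 1 ∣ k then -1 else 0 := by
  simp only [← C_pow, ← map_sum, FiniteField.sum_pow_units]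
  split_ifs <;> simp

open Classical in
lemma sum_polysDegreeLT_ne_zero_pow (d k : ℕ) :
    ∑ c ∈ polysDegreeLT F d with c ≠ 0, c ^ k =
      if Fintype.card F - 1 ∣ k then -zetaLtOne F d k else 0 := by
  simp only [sum_polysDegreeLT_ne_zero, mul_pow, ← Finset.mul_sum, ← Finset.sum_mul,
    sum_units_C_pow, zetaLtOne_eq_sum]
  split_ifs <;> simp

lemma powerSumV_of_lt_natDegree {v : F[X]} {i : ℕ} (hi : i < v.natDegree) (m : ℕ) :
    powerSumV F v i m = powerSum F i m := by
  classical
  rw [powerSumV_eq_sum, powerSum_eq_sum, Finset.filter_true_of_mem]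
  intro n hn
  obtain ⟨hmonic, rfl⟩ := mem_monicsOfDegree.1 hn
  exact fun hdvd => hi.not_ge (natDegree_le_of_dvd hdvd hmonic.ne_zero)

lemma powerSumV_add_natDegree {v : F[X]} (hv : v.Monic) (i m : ℕ) :
    powerSumV F v (i + v.natDegree) m =
      -∑ a ∈ Finset.range (m + 1) with Fintype.card F - 1 ∣ m - a,
        v ^ a * (zetaLtOne F v.natDegree (m - a) * (m.choose a : F[X])) * powerSum F i a := by
  classical
  have hremainder (b : F[X]) :
      (∑ c ∈ polysDegreeLT F v.natDegree, if ¬ v ∣ v * b + c then (v * b + c) ^ m else 0) =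
        ∑ c ∈ polysDegreeLT F v.natDegree with c ≠ 0, (v * b + c) ^ m := by
    rw [Finset.sum_filter]
    refine Finset.sum_congr rfl fun c hc => if_congr (not_congr ?_) rfl rfl
    rw [mem_polysDegreeLT, ← degree_eq_natDegree hv.ne_zero] at hc
    exact dvd_mul_add_iff_of_degree_lt hv hc b
  rw [powerSumV_eq_sum, Finset.sum_filter, sum_monicsOfDegree_add hv]
  simp only [hremainder, sum_sum_mul_add_pow, sum_polysDegreeLT_ne_zero_pow, ← powerSum_eq_sum]
  rw [Finset.sum_filter, ← Finset.sum_neg_distrib]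
  exact Finset.sum_congr rfl fun a _ => by split_ifs <;> ring

lemma powerSumV_eq_zero {v : F[X]} (hv : v.Monic) {i m : ℕ} (h : m + v.natDegree < i) :
    powerSumV F v i m = 0 := by
  obtain ⟨i, rfl⟩ := Nat.exists_eq_add_of_le' ((Nat.le_add_left _ _).trans h.le)
  rw [powerSumV_add_natDegree hv, Finset.sum_eq_zero, neg_zero]
  intro a ha
  have ham : a ≤ m := Finset.mem_range_succ_iff.1 (Finset.mem_filter.1 ha).1
  rw [powerSum_eq_zero (by omega), mul_zero]

end PowerSums

section StarValues

variable {F : Type*} [Field F] [Fintype F]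

lemma zetaInfStar_eq_starSum {N r : ℕ} {m : ℕ → ℕ} (hN : ∀ j < r, m j < N) :
    zetaInfStar F r m = starSum N r (fun j n => powerSum F n (m j)) :=
  finsum_antitone_eq_starSum (f := fun j n => powerSum F n (m j)) fun j hj _ hn =>
    powerSum_eq_zero ((hN j hj).trans_le hn)

lemma zetaVStar_eq_starSum {v : F[X]} (hv : v.Monic) {N r : ℕ} {m : ℕ → ℕ}
    (hN : ∀ j < r, m j < N) :
    zetaVStar F v r m = starSum (N + v.natDegree) r (fun j n => powerSumV F v n (m j)) :=
  finsum_antitone_eq_starSum (f := fun j n => powerSumV F v n (m j)) fun j hj _ hn =>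
    powerSumV_eq_zero hv ((Nat.add_lt_add_right (hN j hj) _).trans_le hn)

lemma zetaLtStar_natDegree_eq_starSum (v : F[X]) (r : ℕ) (m : ℕ → ℕ) :
    zetaLtStar F v.natDegree r m =
      starSum v.natDegree r (fun j n => powerSumV F v n (m j)) := by
  rw [zetaLtStar, finsum_antitone_lt_eq_starSum _ _ fun j n => powerSum F n (m j)]
  exact starSum_congr fun _ _ _ hn => (powerSumV_of_lt_natDegree hn _).symm

lemma starSum_powerSumV_add_natDegree {v : F[X]} (hv : v.Monic) {N l : ℕ} {m : ℕ → ℕ}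
    (hN : ∀ j < l, m j < N) :
    starSum N l (fun j n => powerSumV F v (n + v.natDegree) (m j)) =
      (-1) ^ l * ∑ᶠ a ∈ {a : ℕ → ℕ |
          (∀ j < l, a j ≤ m j ∧ (Fintype.card F - 1) ∣ (m j - a j)) ∧ ∀ j, l ≤ j → a j = 0},
        v ^ (∑ j ∈ Finset.range l, a j) *
          (∏ j ∈ Finset.range l,
            zetaLtOne F v.natDegree (m j - a j) * (Nat.choose (m j) (a j) : F[X])) *
          zetaInfStar F l a := by
  simp only [powerSumV_add_natDegree hv, starSum_neg]
  rw [starSum_sum_mul N l _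
    (fun j a => v ^ a * (zetaLtOne F v.natDegree (m j - a) * ((m j).choose a : F[X])))
    (fun a n => powerSum F n a)]
  simp only [Finset.mem_filter, Finset.mem_range_succ_iff, Finset.prod_mul_distrib,
    Finset.prod_pow_eq_pow_sum]
  congr 1
  refine finsum_mem_congr rfl fun a ha => ?_
  rw [zetaInfStar_eq_starSum fun j hj => (ha.1 j hj).1.trans_lt (hN j hj)]

end StarValues

theorem zetaVStar_eq_sum_zetaInfStar_general (F : Type*) [Field F] [Fintype F] (v : Polynomial F)
    (hv : v.Monic) (r : ℕ) (m : ℕ → ℕ) :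
    zetaVStar F v r m =
      ∑ l ∈ Finset.range (r + 1),
        (-1 : Polynomial F) ^ l * zetaLtStar F v.natDegree (r - l) (fun j => m (l + j)) *
          ∑ᶠ a ∈ {a : ℕ → ℕ |
              (∀ j < l, a j ≤ m j ∧ (Fintype.card F - 1) ∣ (m j - a j)) ∧
                ∀ j, l ≤ j → a j = 0},
            v ^ (∑ j ∈ Finset.range l, a j) *
              (∏ j ∈ Finset.range l,
                zetaLtOne F v.natDegree (m j - a j) * (Nat.choose (m j) (a j) : Polynomial F)) *
              zetaInfStar F l a := by
  obtain ⟨N, hN⟩ : ∃ N, ∀ j < r, m j < N :=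
    ⟨(Finset.range r).sup m + 1, fun j hj =>
      Nat.lt_succ_of_le (Finset.le_sup (Finset.mem_range.2 hj))⟩
  rw [zetaVStar_eq_starSum hv hN, starSum_add]
  refine Finset.sum_congr rfl fun l hl => ?_
  have hlr : l ≤ r := Finset.mem_range_succ_iff.1 hl
  rw [starSum_powerSumV_add_natDegree hv fun j hj => hN j (hj.trans_le hlr),
    zetaLtStar_natDegree_eq_starSum, mul_right_comm]

/-- Formula for v-adic multiple zeta star values at negative integers in terms of
∞-adic ones.  The inner sum runs over tuples `(a_1, …, a_l)` (encoded as functions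
`a : ℕ → ℕ` vanishing from index `l` on) with `0 ≤ a_j ≤ m_j` and `(q-1) ∣ (m_j - a_j)`. -/
theorem zetaVStar_eq_sum_zetaInfStar (F : Type*) [Field F] [Fintype F] (v : Polynomial F)
    (hv : v.Monic) (hvirr : Irreducible v) (hd : 0 < v.natDegree) (r : ℕ) (hr : 1 ≤ r)
    (m : ℕ → ℕ) :
    zetaVStar F v r m =
      ∑ l ∈ Finset.range (r + 1),
        (-1 : Polynomial F) ^ l * zetaLtStar F v.natDegree (r - l) (fun j => m (l + j)) *
          ∑ᶠ a ∈ {a : ℕ → ℕ |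
              (∀ j < l, a j ≤ m j ∧ (Fintype.card F - 1) ∣ (m j - a j)) ∧
                ∀ j, l ≤ j → a j = 0},
            v ^ (∑ j ∈ Finset.range l, a j) *
              (∏ j ∈ Finset.range l,
                zetaLtOne F v.natDegree (m j - a j) * (Nat.choose (m j) (a j) : Polynomial F)) *
              zetaInfStar F l a :=
  zetaVStar_eq_sum_zetaInfStar_general F v hv r m
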